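/- arXiv:2301.01022 — 2 statements merged into one kernel-verified Lean document; each statement's English description precedes it below -/
import Mathlib

section
/- For all real t with 0 ≤ t ≤ 1 and all γ with 1 < γ ≤ 5/3, setting θ = (γ-1)/2, the function f(t) = (5γ-3)·t^(3θ+1) - 2(3γ-1)·t^(2θ+1) + γ(3-γ)·t^(θ+1) - (3-γ)(γ-1)·t^θ + 2(γ-1) is nonnegative. -/
/-- Weighted AM-GM for `1` and `t`, multiplied by `t ^ θ`. -/
theorem mul_one_sub_mul_rpow_le {θ t : ℝ} (hθ0 : 0 ≤ θ) (hθ1 : θ ≤ 1) (ht : 0 < t) :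
    t * (1 - (1 - θ) * t ^ θ) ≤ θ * t ^ θ := by
  have hs : 0 < t ^ θ := Real.rpow_pos_of_pos ht θ
  have hamgm := Real.geom_mean_le_arith_mean2_weighted hθ0 (sub_nonneg.2 hθ1)
    zero_le_one ht.le (by ring)
  rw [Real.one_rpow, one_mul, mul_one] at hamgm
  have hmul : t ^ (1 - θ) * t ^ θ = t := by
    rw [← Real.rpow_add ht, sub_add_cancel, Real.rpow_one]
  have := mul_le_mul_of_nonneg_right hamgm hs.le
  rw [hmul] at this
  linarith

/-- The inequality in the variables `t` and `s`, where `s` stands for `t ^ θ`. -/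
theorem source_polynomial_nonneg {θ s t : ℝ} (hθ0 : 0 < θ) (hs0 : 0 ≤ s) (hs1 : s ≤ 1)
    (ht : 0 ≤ t) (hts : t * (1 - (1 - θ) * s) ≤ θ * s) :
    0 ≤ t * s * ((1 + 5 * θ) * s ^ 2 - (2 + 6 * θ) * s + (1 + 2 * θ) * (1 - θ))
      + 2 * θ * (1 - (1 - θ) * s) := by
  set Q := (1 + 5 * θ) * s ^ 2 - (2 + 6 * θ) * s + (1 + 2 * θ) * (1 - θ) with hQ
  set D := 1 - (1 - θ) * s with hD
  have hDpos : 0 < D := by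
    rcases hs0.eq_or_lt with rfl | hs
    · simp [hD]
    · nlinarith [mul_pos hθ0 hs]
  rcases le_or_gt 0 Q with h | h
  · positivity
  · have hfactor : s ^ 2 * Q + 2 * D ^ 2
        = (1 - s) ^ 2 * ((1 + 5 * θ) * s ^ 2 + 4 * θ * s + 2) := by
      rw [hQ, hD]; ring
    have hnonneg : 0 ≤ θ * (s ^ 2 * Q + 2 * D ^ 2) := by
      rw [hfactor]; positivity
    have hbound := mul_le_mul_of_nonpos_right hts (mul_nonpos_of_nonneg_of_nonpos hs0 h.le)
    refine nonneg_of_mul_nonneg_right (a := D) ?_ hDpos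
    linarith

theorem stmt_0 (γ t : ℝ) (hγ1 : 1 < γ) (hγ2 : γ ≤ 5/3)
    (ht0 : 0 ≤ t) (ht1 : t ≤ 1) :
    0 ≤ (5*γ-3) * t ^ (3*((γ-1)/2)+1) - 2*(3*γ-1) * t ^ (2*((γ-1)/2)+1)
      + γ*(3-γ) * t ^ ((γ-1)/2+1) - (3-γ)*(γ-1) * t ^ ((γ-1)/2) + 2*(γ-1) := by
  obtain ⟨θ, rfl⟩ : ∃ θ, γ = 1 + 2 * θ := ⟨(γ - 1) / 2, by ring⟩
  have hθ0 : 0 < θ := by linarith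
  rw [show (1 + 2 * θ - 1) / 2 = θ by ring]
  rcases ht0.eq_or_lt with rfl | ht
  · rw [Real.zero_rpow (by positivity), Real.zero_rpow (by positivity),
      Real.zero_rpow (by positivity), Real.zero_rpow hθ0.ne']
    linarith
  · have hpow2 : t ^ (2 * θ) = (t ^ θ) ^ 2 := by
      rw [mul_comm, Real.rpow_mul ht0, Real.rpow_ofNat]
    have hpow3 : t ^ (3 * θ) = (t ^ θ) ^ 3 := by
      rw [mul_comm, Real.rpow_mul ht0, Real.rpow_ofNat]
    rw [Real.rpow_add_one ht.ne', Real.rpow_add_one ht.ne', Real.rpow_add_one ht.ne',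
      hpow2, hpow3]
    linarith [source_polynomial_nonneg hθ0 (Real.rpow_nonneg ht0 θ)
      (Real.rpow_le_one ht0 ht1 hθ0.le) ht0
      (mul_one_sub_mul_rpow_le hθ0.le (by linarith) ht)]
end

section
/- Let 1 < γ ≤ 5/3, θ = (γ-1)/2, ρ̄ > 0. For all ρ with 0 ≤ ρ ≤ ρ̄: (5γ−3)/(γ(γ−1)²)·ρ^(γ+θ) − 2(3γ−1)/(γ(γ−1)²)·ρ̄^θ·ρ^γ + (3−γ)/(γ−1)²·ρ̄^(γ−1)·ρ^(θ+1) − (3−γ)/(γ(γ−1))·ρ̄^γ·ρ^θ + 2/(γ(γ−1))·ρ̄^(γ+θ) ≥ 0, with equality only when ρ = ρ̄. -/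
/-- Bernoulli's inequality bounds below the polynomial part of the estimate, where `u` stands for
`(ρb / ρ) ^ θ` and `w` for `(ρb / ρ) ^ γ`. -/
theorem six_mul_sq_sub_one_le {γ u w : ℝ} (hγ1 : 1 < γ) (hγ2 : γ ≤ 5/3) (hu : 1 ≤ u)
    (hw : (γ-1)/2 + γ * (u - 1) ≤ (γ-1)/2 * w) :
    6 * (u - 1)^2 ≤ (5*γ-3) - 2*(3*γ-1)*u + γ*(3-γ)*u^2 - (3-γ)*(γ-1)*w + 2*(γ-1)*(w*u) := by
  obtain ⟨θ, rfl⟩ : ∃ θ, γ = 1 + 2*θ := ⟨(γ-1)/2, by ring⟩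
  obtain ⟨y, rfl⟩ : ∃ y, u = 1 + y := ⟨u - 1, by ring⟩
  have hθ : 0 < θ := by linarith
  have hy : 0 ≤ y := by linarith
  have h1 : 0 ≤ (θ * w - θ - (1 + 2*θ) * y) * (θ + y) :=
    mul_nonneg (by nlinarith) (by linarith)
  have h2 : 0 ≤ y^2 * (θ * (5 - 2*θ)) :=
    mul_nonneg (sq_nonneg y) (mul_nonneg hθ.le (by linarith))
  nlinarith

/-- Bernoulli's inequality for the exponent `γ / θ`. -/
theorem add_mul_rpow_sub_one_le {γ θ x : ℝ} (hθ : 0 < θ) (hγ : θ ≤ γ) (hx : 0 < x) :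
    θ + γ * (x ^ θ - 1) ≤ θ * x ^ γ := by
  have h := one_add_mul_self_le_rpow_one_add (s := x ^ θ - 1) (p := γ / θ)
    (by linarith [Real.rpow_pos_of_pos hx θ]) ((one_le_div hθ).2 hγ)
  rw [add_sub_cancel, ← Real.rpow_mul hx.le, mul_div_cancel₀ _ hθ.ne'] at h
  calc θ + γ * (x ^ θ - 1) = θ * (1 + γ / θ * (x ^ θ - 1)) := by field_simp
    _ ≤ θ * x ^ γ := mul_le_mul_of_nonneg_left h hθ.le

theorem stmt_9 (γ θ ρb ρ : ℝ) (hγ1 : 1 < γ) (hγ2 : γ ≤ 5/3)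
    (hθ : θ = (γ-1)/2) (hρb : 0 < ρb) (hρ0 : 0 ≤ ρ) (hρ : ρ ≤ ρb) :
    0 ≤ ((5*γ-3)/(γ*(γ-1)^2)) * ρ ^ (γ+θ)
      - (2*(3*γ-1)/(γ*(γ-1)^2)) * ρb ^ θ * ρ ^ γ
      + ((3-γ)/(γ-1)^2) * ρb ^ (γ-1) * ρ ^ (θ+1)
      - ((3-γ)/(γ*(γ-1))) * ρb ^ γ * ρ ^ θ
      + (2/(γ*(γ-1))) * ρb ^ (γ+θ)
    ∧ (((5*γ-3)/(γ*(γ-1)^2)) * ρ ^ (γ+θ)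
      - (2*(3*γ-1)/(γ*(γ-1)^2)) * ρb ^ θ * ρ ^ γ
      + ((3-γ)/(γ-1)^2) * ρb ^ (γ-1) * ρ ^ (θ+1)
      - ((3-γ)/(γ*(γ-1))) * ρb ^ γ * ρ ^ θ
      + (2/(γ*(γ-1))) * ρb ^ (γ+θ) = 0 → ρ = ρb) := by
  have hθ0 : 0 < θ := by linarith
  have hγ0 : 0 < γ := by linarith
  have hγ' : 0 < γ - 1 := by linarith
  rcases hρ0.eq_or_lt with rfl | hρ0
  · have hpos : 0 < (2/(γ*(γ-1))) * ρb ^ (γ+θ) := by positivity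
    rw [Real.zero_rpow (by linarith), Real.zero_rpow (by linarith), Real.zero_rpow (by linarith),
      Real.zero_rpow (by linarith)]
    exact ⟨by linarith, fun h => by linarith⟩
  obtain ⟨x, rfl⟩ : ∃ x, ρb = x * ρ := ⟨ρb / ρ, by field_simp⟩
  have hx1 : 1 ≤ x := le_of_mul_le_mul_right (by linarith) hρ0
  have hx0 : 0 < x := by linarith
  have hu : 1 ≤ x ^ θ := Real.one_le_rpow hx1 hθ0.le
  have hF := six_mul_sq_sub_one_le hγ1 hγ2 hu
    (by rw [← hθ]; exact add_mul_rpow_sub_one_le hθ0 (by linarith) hx0)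
  have hsq : ∀ z : ℝ, 0 < z → z ^ (γ-1) = (z ^ θ)^2 := fun z hz => by
    rw [← Real.rpow_mul_natCast hz.le]; congr 1; push_cast; linarith
  have hC : ρ ^ γ = ρ ^ (θ+1) * ρ ^ θ := by
    rw [← Real.rpow_add hρ0]; congr 1; linarith
  rw [hsq _ hρb, Real.rpow_add hρ0 γ θ, Real.rpow_add hρb γ θ, Real.mul_rpow hx0.le hρ0.le,
    Real.mul_rpow hx0.le hρ0.le, hC]
  have hA := Real.rpow_pos_of_pos hρ0 θ
  have hB := Real.rpow_pos_of_pos hρ0 (θ+1)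
  have hx_eq : x ^ θ = 1 → x = 1 := fun h =>
    hx1.antisymm' (not_lt.1 fun hlt => (Real.one_lt_rpow hlt hθ0).ne' h)
  generalize x ^ θ = u at *
  generalize x ^ γ = w at *
  generalize ρ ^ θ = A at *
  generalize ρ ^ (θ+1) = B at *
  set F := (5*γ-3) - 2*(3*γ-1)*u + γ*(3-γ)*u^2 - (3-γ)*(γ-1)*w + 2*(γ-1)*(w*u) with hFdef
  have hK : 0 < B * A^2 / (γ*(γ-1)^2) := by positivity
  have key : ((5*γ-3)/(γ*(γ-1)^2)) * (B * A * A)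
      - (2*(3*γ-1)/(γ*(γ-1)^2)) * (u * A) * (B * A)
      + ((3-γ)/(γ-1)^2) * (u * A)^2 * B
      - ((3-γ)/(γ*(γ-1))) * (w * (B * A)) * A
      + (2/(γ*(γ-1))) * (w * (B * A) * (u * A)) = B * A^2 / (γ*(γ-1)^2) * F := by
    rw [hFdef]
    field_simp
  rw [key]
  have hF0 : 0 ≤ F := by nlinarith [sq_nonneg (u - 1)]
  refine ⟨mul_nonneg hK.le hF0, fun h => ?_⟩
  have hFz : F = 0 := (mul_eq_zero.1 h).resolve_left hK.ne'
  have hu1 : u - 1 = 0 := pow_eq_zero_iff two_ne_zero |>.1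
    (le_antisymm (by linarith) (sq_nonneg (u - 1)))
  rw [hx_eq (by linarith), one_mul]
end
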